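/- arXiv:2107.09829 — 2 statements merged into one kernel-verified Lean document; each statement's English description precedes it below -/
import Mathlib

section
/- Let d ∈ (0,1/2) and h ∈ (0, 1/2 − d). Then the function (x,y) ↦ (1 − y)^{h−1} (−x)^{h−1} |x − y|^{2d−1} is integrable on (−∞,0) × (−∞,1), and the integral ∫_{−∞}^0 ∫_{−∞}^1 (1 − y)^{h−1} (−x)^{h−1} |x − y|^{2d−1} dy dx is a finite positive real number. -/
open MeasureTheory Real Set

lemma aux_pos (f : ℝ → ℝ) (hf : IntegrableOn f (Ioi 0)) (h0 : ∀ x ∈ Ioi (0:ℝ), 0 ≤ f x)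
    (h1 : ∀ x ∈ Ioi (1:ℝ), 0 < f x) : 0 < ∫ x in Ioi (0:ℝ), f x := by
  rw [setIntegral_pos_iff_support_of_nonneg_ae _ hf]
  · refine lt_of_lt_of_le ?_ (measure_mono (s := Ioi (1:ℝ)) ?_)
    · simp
    · intro x hx
      exact ⟨(h1 x hx).ne', mem_Ioi.2 (lt_trans one_pos (mem_Ioi.1 hx))⟩
  · exact (ae_restrict_iff' measurableSet_Ioi).2 (Filter.Eventually.of_forall h0)

lemma aux_small (a b : ℝ) (ha : -1 < a) : IntegrableOn (fun x : ℝ => x ^ a) (Ioc 0 b) := by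
  rcases le_total 0 b with hb | hb
  · exact (intervalIntegrable_iff_integrableOn_Ioc_of_le hb).1
      (intervalIntegral.intervalIntegrable_rpow' ha)
  · simp [Ioc_eq_empty (not_lt.2 hb)]

lemma aux_mid (a : ℝ) (ha : -1 < a) :
    IntegrableOn (fun x : ℝ => |x - 1| ^ a) (Ioc (1/2) 2) := by
  have h1 : IntervalIntegrable (fun x : ℝ => |x| ^ a) volume 0 1 := by
    rw [intervalIntegrable_iff_integrableOn_Ioc_of_le zero_le_one]
    exact (aux_small a 1 ha).congr_fun (fun x hx => by simp only [abs_of_pos hx.1])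
      measurableSet_Ioc
  have h2 : IntervalIntegrable (fun x : ℝ => |x| ^ a) volume (-1) 0 := by
    have := (IntervalIntegrable.iff_comp_neg).1 h1
    simpa using this.symm
  have h3 := ((h2.trans h1).comp_sub_right 1)
  rw [intervalIntegrable_iff_integrableOn_Ioc_of_le (by norm_num)] at h3
  exact h3.mono_set (Ioc_subset_Ioc (by norm_num) (by norm_num))

lemma aux_ker (a b : ℝ) (ha : -1 < a) (ha' : a ≤ 0) (hb : -1 < b) (hb' : b ≤ 0)
    (hab : a + b < -1) :
    IntegrableOn (fun v : ℝ => v ^ a * |v - 1| ^ b) (Ioi 0) := by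
  have hs : Ioi (0:ℝ) = Ioc 0 (1/2) ∪ Ioc (1/2) 2 ∪ Ioi 2 := by
    rw [Ioc_union_Ioc_eq_Ioc (by norm_num) (by norm_num), Ioc_union_Ioi_eq_Ioi (by norm_num)]
  have hm : ∀ μ : Measure ℝ, AEStronglyMeasurable (fun v : ℝ => v ^ a * |v - 1| ^ b) μ :=
    fun μ => (by fun_prop : Measurable (fun v : ℝ => v ^ a * |v - 1| ^ b)).aestronglyMeasurable
  rw [hs]
  refine (IntegrableOn.union ?_ ?_).union ?_
  · refine Integrable.mono' ((aux_small a (1/2) ha).mul_const ((1/2) ^ b)) (hm _) ?_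
    refine (ae_restrict_iff' measurableSet_Ioc).2 (Filter.Eventually.of_forall fun v hv => ?_)
    have h0 := rpow_nonneg hv.1.le a
    rw [norm_of_nonneg (by positivity)]
    refine mul_le_mul_of_nonneg_left (rpow_le_rpow_of_nonpos (by norm_num) ?_ hb') h0
    rw [abs_of_nonpos (by linarith [hv.2])]; linarith [hv.2]
  · refine Integrable.mono' ((aux_mid b hb).const_mul ((1/2) ^ a)) (hm _) ?_
    refine (ae_restrict_iff' measurableSet_Ioc).2 (Filter.Eventually.of_forall fun v hv => ?_)
    have h0 := rpow_nonneg (show 0 ≤ v by linarith [hv.1]) a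
    rw [norm_of_nonneg (by positivity)]
    exact mul_le_mul_of_nonneg_right (rpow_le_rpow_of_nonpos (by norm_num) hv.1.le ha')
      (by positivity)
  · refine Integrable.mono' ((integrableOn_Ioi_rpow_of_lt hab (c := 2) (by norm_num)).const_mul
      ((1/2) ^ b)) (hm _) ?_
    refine (ae_restrict_iff' measurableSet_Ioi).2 (Filter.Eventually.of_forall fun v hv => ?_)
    have hv : 2 < v := hv
    have hv0 : 0 < v := by linarith
    rw [norm_of_nonneg (by positivity)]
    have : |v - 1| ^ b ≤ (1/2 * v) ^ b := by
      refine rpow_le_rpow_of_nonpos (by linarith) ?_ hb'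
      rw [abs_of_pos (by linarith)]; linarith
    rw [mul_rpow (by norm_num) hv0.le] at this
    rw [rpow_add hv0]
    calc _ ≤ v ^ a * ((1/2) ^ b * v ^ b) := by gcongr
      _ = _ := by ring

lemma aux_out (a c : ℝ) (ha : -1 < a) (hc : c ≤ 0) (hac : a + c < -1) :
    IntegrableOn (fun u : ℝ => u ^ a * (1 + u) ^ c) (Ioi 0) := by
  have hm : ∀ μ : Measure ℝ, AEStronglyMeasurable (fun u : ℝ => u ^ a * (1 + u) ^ c) μ :=
    fun μ => (by fun_prop : Measurable (fun u : ℝ => u ^ a * (1 + u) ^ c)).aestronglyMeasurable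
  rw [← Ioc_union_Ioi_eq_Ioi (zero_le_one (α := ℝ))]
  refine IntegrableOn.union ?_ ?_
  · refine Integrable.mono' (aux_small a 1 ha) (hm _) ?_
    refine (ae_restrict_iff' measurableSet_Ioc).2 (Filter.Eventually.of_forall fun v hv => ?_)
    have hv0 := hv.1
    rw [norm_of_nonneg (by positivity)]
    exact mul_le_of_le_one_right (by positivity)
      (rpow_le_one_of_one_le_of_nonpos (by linarith) hc)
  · refine Integrable.mono' (integrableOn_Ioi_rpow_of_lt hac one_pos) (hm _) ?_
    refine (ae_restrict_iff' measurableSet_Ioi).2 (Filter.Eventually.of_forall fun v hv => ?_)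
    have hv0 : 0 < v := lt_trans one_pos hv
    rw [norm_of_nonneg (by positivity), rpow_add hv0]
    exact mul_le_mul_of_nonneg_left (rpow_le_rpow_of_nonpos hv0 (by linarith) hc) (by positivity)

lemma aux_refl (f : ℝ → ℝ) (c : ℝ) :
    (IntegrableOn (fun y => f (c - y)) (Iio c) ↔ IntegrableOn f (Ioi 0)) ∧
    ∫ y in Iio c, f (c - y) = ∫ v in Ioi (0:ℝ), f v := by
  have hp := Measure.measurePreserving_sub_left (volume : Measure ℝ) c
  have he : MeasurableEmbedding (fun y : ℝ => c - y) := (Homeomorph.subLeft c).measurableEmbedding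
  have hs : (fun y : ℝ => c - y) ⁻¹' (Ioi 0) = Iio c := by ext; simp
  constructor
  · rw [← hs]; exact hp.integrableOn_comp_preimage he
  · rw [← hs]; exact hp.setIntegral_preimage_emb he f _

lemma aux_scale (a b A : ℝ) (hA : 0 < A) (v : ℝ) (hv : 0 < v) :
    (A * v) ^ a * |A * v - A| ^ b = A ^ (a + b) * (v ^ a * |v - 1| ^ b) := by
  rw [show A * v - A = A * (v - 1) by ring, abs_mul, abs_of_pos hA, mul_rpow hA.le hv.le,
    mul_rpow hA.le (abs_nonneg _), rpow_add hA]
  ring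

lemma aux_inner (a b A : ℝ) (hA : 0 < A)
    (hk : IntegrableOn (fun v : ℝ => v ^ a * |v - 1| ^ b) (Ioi 0)) :
    IntegrableOn (fun v : ℝ => v ^ a * |v - A| ^ b) (Ioi 0) ∧
    ∫ v in Ioi (0:ℝ), v ^ a * |v - A| ^ b
      = A ^ (a + b + 1) * ∫ v in Ioi (0:ℝ), v ^ a * |v - 1| ^ b := by
  constructor
  · have := integrableOn_Ioi_comp_mul_left_iff (fun v : ℝ => v ^ a * |v - A| ^ b) 0 hA
    rw [mul_zero] at this
    rw [← this]
    exact IntegrableOn.congr_fun (hk.const_mul (A ^ (a+b)))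
      (fun v hv => (aux_scale a b A hA v hv).symm) measurableSet_Ioi
  · have := integral_comp_mul_left_Ioi (fun v : ℝ => v ^ a * |v - A| ^ b) 0 hA
    rw [mul_zero, setIntegral_congr_fun measurableSet_Ioi
      (fun v hv => aux_scale a b A hA v hv), integral_const_mul, smul_eq_mul] at this
    rw [rpow_add_one hA.ne']
    field_simp at this
    linarith

/-- the limiting constant in the long-memory asymptotics is a finite positive
real number: for `d ∈ (0,1/2)` and `h ∈ (0, 1/2−d)`, the function
`(x,y) ↦ (1−y)^{h−1}(−x)^{h−1}|x−y|^{2d−1}` is integrable on `(−∞,0) × (−∞,1)` and its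
integral is positive. -/
theorem long_memory_constant_finite_positive (d h : ℝ) (hd0 : 0 < d) (hd2 : d < 1 / 2)
    (hh0 : 0 < h) (hh : h < 1 / 2 - d) :
    IntegrableOn (fun p : ℝ × ℝ =>
        (1 - p.2) ^ (h - 1) * (-p.1) ^ (h - 1) * |p.1 - p.2| ^ (2 * d - 1))
      (Iio (0 : ℝ) ×ˢ Iio (1 : ℝ)) ∧
    0 < ∫ x in Iio (0 : ℝ), ∫ y in Iio (1 : ℝ),
        (1 - y) ^ (h - 1) * (-x) ^ (h - 1) * |x - y| ^ (2 * d - 1) := by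
  have hk := aux_ker (h - 1) (2 * d - 1) (by linarith) (by linarith) (by linarith) (by linarith)
    (by linarith)
  have hC := aux_pos _ hk
    (fun x hx => by
      have hx : 0 < x := hx
      positivity)
    (fun x hx => by
      have hx : 1 < x := hx
      have : 0 < |x - 1| := abs_pos.2 (by linarith)
      positivity)
  set C := ∫ v in Ioi (0:ℝ), v ^ (h - 1) * |v - 1| ^ (2 * d - 1) with hCdef
  -- the slices
  have hslice : ∀ x ∈ Iio (0:ℝ),
      IntegrableOn (fun y => (1 - y) ^ (h - 1) * (-x) ^ (h - 1) * |x - y| ^ (2 * d - 1)) (Iio 1) ∧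
      ∫ y in Iio (1 : ℝ), (1 - y) ^ (h - 1) * (-x) ^ (h - 1) * |x - y| ^ (2 * d - 1)
        = C * ((0 - x) ^ (h - 1) * (1 + (0 - x)) ^ (h + 2 * d - 1)) := by
    intro x hx
    have hx : x < 0 := hx
    obtain ⟨i1, i2⟩ := aux_inner (h - 1) (2 * d - 1) (1 - x) (by linarith) hk
    obtain ⟨r1, r2⟩ := aux_refl (fun v : ℝ => v ^ (h - 1) * |v - (1 - x)| ^ (2 * d - 1)) 1
    have hfe : (fun y : ℝ => (1 - y) ^ (h - 1) * (-x) ^ (h - 1) * |x - y| ^ (2 * d - 1))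
        = fun y => (-x) ^ (h - 1) * ((1 - y) ^ (h - 1) * |1 - y - (1 - x)| ^ (2 * d - 1)) := by
      funext y
      rw [show 1 - y - (1 - x) = x - y by ring]; ring
    rw [hfe]
    refine ⟨(r1.2 i1).const_mul _, ?_⟩
    rw [integral_const_mul, r2, i2, zero_sub, ← sub_eq_add_neg,
      show h - 1 + (2 * d - 1) + 1 = h + 2 * d - 1 by ring]
    ring
  have hg := (aux_out (h - 1) (h + 2 * d - 1) (by linarith) (by linarith) (by linarith)).const_mul C
  obtain ⟨q1, q2⟩ := aux_refl
    (fun u : ℝ => C * (u ^ (h - 1) * (1 + u) ^ (h + 2 * d - 1))) 0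
  constructor
  · rw [IntegrableOn, Measure.volume_eq_prod, ← Measure.prod_restrict, integrable_prod_iff]
    · constructor
      · exact (ae_restrict_iff' measurableSet_Iio).2
          (Filter.Eventually.of_forall fun x hx => (hslice x hx).1)
      · refine IntegrableOn.congr_fun (q1.2 hg) (fun x hx => ?_) measurableSet_Iio
        rw [← (hslice x hx).2]
        refine setIntegral_congr_fun measurableSet_Iio (fun y hy => ?_)
        have h1 : 0 < -x := neg_pos.2 hx
        have h2 : 0 < 1 - y := sub_pos.2 hy
        exact (norm_of_nonneg (by positivity)).symm
    · exact (by fun_prop : Measurable (fun p : ℝ × ℝ =>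
        (1 - p.2) ^ (h - 1) * (-p.1) ^ (h - 1) *
          |p.1 - p.2| ^ (2 * d - 1))).aestronglyMeasurable
  · rw [setIntegral_congr_fun measurableSet_Iio (fun x hx => (hslice x hx).2), q2]
    refine aux_pos _ hg ?_ ?_
    · intro x hx
      have hx : 0 < x := hx
      positivity
    · intro x hx
      have hx : 0 < x := lt_trans one_pos hx
      positivity
end

section
/- Let d ∈ (0,1/2) and h ∈ (0, 1/2 − d). Then the function (u,v) ↦ ((1−u)_+^h − (−u)_+^h)((1−v)_+^h − (−v)_+^h) |u − v|^{2d−1} is integrable on ℝ × ℝ; in particular ∫_ℝ ∫_ℝ ((1−u)_+^h − (−u)_+^h)((1−v)_+^h − (−v)_+^h) |u − v|^{2d−1} du dv is finite. -/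
open MeasureTheory Real

/-- The real Beta integrand is integrable. -/
lemma aux_beta (h e : ℝ) (hh0 : 0 < h) (he : -1 < e) :
    IntervalIntegrable (fun r : ℝ => r ^ (h - 1) * (1 - r) ^ e) volume 0 1 := by
  have key := Complex.betaIntegral_convergent (u := (h : ℂ)) (v := ((e + 1 : ℝ) : ℂ))
    (by simpa using hh0) (by simp; linarith)
  rw [intervalIntegrable_iff_integrableOn_Ioo_of_le zero_le_one] at key ⊢
  refine key.norm.congr ?_
  refine (ae_restrict_iff' measurableSet_Ioo).2 (Filter.Eventually.of_forall ?_)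
  intro r hr
  have h1 : (1 - (r : ℂ)) = ((1 - r : ℝ) : ℂ) := by push_cast; rfl
  have hr1 : 0 < 1 - r := by linarith [hr.2]
  simp only [norm_mul, h1]
  rw [Complex.norm_cpow_eq_rpow_re_of_pos hr.1, Complex.norm_cpow_eq_rpow_re_of_pos hr1]
  simp

lemma aux_scale_s16 (h e t r : ℝ) (ht : 0 < t) (hr : r ∈ Set.Ioc (0 : ℝ) t) :
    r ^ (h - 1) * (t - r) ^ e =
      t ^ (h - 1 + e) * ((t⁻¹ * r) ^ (h - 1) * (1 - t⁻¹ * r) ^ e) := by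
  have h1 : r = t * (t⁻¹ * r) := by field_simp
  have hx : 0 ≤ t⁻¹ * r := by have := hr.1; positivity
  have hx1 : 0 ≤ 1 - t⁻¹ * r := by
    have : t⁻¹ * r ≤ t⁻¹ * t := by have := hr.2; gcongr
    rw [inv_mul_cancel₀ ht.ne'] at this
    linarith
  have h2 : t - r = t * (1 - t⁻¹ * r) := by field_simp
  rw [h2, mul_rpow ht.le hx1]
  nth_rewrite 1 [h1]
  rw [mul_rpow ht.le hx, rpow_add ht]
  ring

lemma aux_beta_t (h e t : ℝ) (hh0 : 0 < h) (he : -1 < e) (ht : 0 < t) :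
    IntegrableOn (fun r : ℝ => r ^ (h - 1) * (t - r) ^ e) (Set.Ioc 0 t) ∧
    ∫ r in Set.Ioc 0 t, r ^ (h - 1) * (t - r) ^ e =
      t ^ (h + e) * ∫ r in (0 : ℝ)..1, r ^ (h - 1) * (1 - r) ^ e := by
  have hb := aux_beta h e hh0 he
  constructor
  · have := (hb.comp_mul_left (c := t⁻¹)).const_mul (t ^ (h - 1 + e))
    simp only [zero_div, one_div, inv_inv] at this
    rw [intervalIntegrable_iff_integrableOn_Ioc_of_le ht.le] at this
    exact this.congr_fun (fun r hr => (aux_scale_s16 h e t r ht hr).symm) measurableSet_Ioc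
  · rw [setIntegral_congr_fun measurableSet_Ioc (fun r hr => aux_scale_s16 h e t r ht hr),
      ← intervalIntegral.integral_of_le ht.le, intervalIntegral.integral_const_mul,
      intervalIntegral.integral_comp_mul_left (fun r => r ^ (h - 1) * (1 - r) ^ e)
        (inv_ne_zero ht.ne')]
    rw [inv_inv, mul_zero, inv_mul_cancel₀ ht.ne', smul_eq_mul, ← mul_assoc]
    congr 1
    rw [show h + e = (h - 1 + e) + 1 by ring, rpow_add_one ht.ne']

/-- The half-plane kernel. -/
noncomputable def auxF (h e : ℝ) : ℝ × ℝ → ℝ :=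
  Set.indicator {p : ℝ × ℝ | 1 < p.1 ∧ 0 < p.2 ∧ p.2 ≤ p.1}
    (fun p => p.1 ^ (h - 1) * (p.2 ^ (h - 1) * (p.1 - p.2) ^ e))

lemma auxF_nonneg (h e : ℝ) (p : ℝ × ℝ) : 0 ≤ auxF h e p := by
  refine Set.indicator_nonneg ?_ p
  rintro p ⟨h1, h2, h3⟩
  have : 0 ≤ p.1 - p.2 := by linarith
  have : 0 < p.1 := by linarith
  positivity

lemma auxF_sec (h e t : ℝ) (ht : 1 < t) :
    (fun s => auxF h e (t, s)) =
      Set.indicator (Set.Ioc 0 t) (fun s => t ^ (h - 1) * (s ^ (h - 1) * (t - s) ^ e)) := by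
  funext s
  simp only [auxF, Set.indicator, Set.mem_ofPred_eq, Set.mem_Ioc, ht, true_and]

lemma auxF_sec0 (h e t : ℝ) (ht : ¬ 1 < t) : (fun s => auxF h e (t, s)) = fun _ => 0 := by
  funext s
  simp only [auxF, Set.indicator, Set.mem_ofPred_eq, ht, false_and, if_false]

lemma auxF_integrable (h e : ℝ) (hh0 : 0 < h) (he : -1 < e) (hs : 2 * h + e < 0) :
    Integrable (auxF h e) := by
  have hm : Measurable (auxF h e) := by
    refine Measurable.indicator (by fun_prop) ?_
    exact ((measurableSet_lt measurable_const measurable_fst).inter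
      ((measurableSet_lt measurable_const measurable_snd).inter
        (measurableSet_le measurable_snd measurable_fst)))
  rw [Measure.volume_eq_prod, integrable_prod_iff hm.aestronglyMeasurable]
  constructor
  · refine Filter.Eventually.of_forall fun t => ?_
    by_cases ht : 1 < t
    · rw [auxF_sec h e t ht, integrable_indicator_iff measurableSet_Ioc]
      exact (aux_beta_t h e t hh0 he (by linarith)).1.const_mul _
    · rw [auxF_sec0 h e t ht]
      exact integrable_zero _ _ _
  · have : (fun t => ∫ s, ‖auxF h e (t, s)‖) = Set.indicator (Set.Ioi 1)
        (fun t => t ^ (2 * h + e - 1) * ∫ r in (0 : ℝ)..1, r ^ (h - 1) * (1 - r) ^ e) := by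
      funext t
      simp_rw [Real.norm_of_nonneg (auxF_nonneg _ _ _)]
      by_cases ht : 1 < t
      · rw [auxF_sec h e t ht, integral_indicator measurableSet_Ioc, integral_const_mul,
          (aux_beta_t h e t hh0 he (by linarith)).2, Set.indicator_of_mem (by exact ht),
          ← mul_assoc, ← rpow_add (by linarith)]
        congr 2
        ring
      · rw [auxF_sec0 h e t ht, Set.indicator_of_notMem (by exact ht)]
        simp
    rw [this, integrable_indicator_iff measurableSet_Ioi]
    exact (integrableOn_Ioi_rpow_of_lt (by linarith) one_pos).mul_const _

lemma aux_g (h u : ℝ) (hh0 : 0 < h) (hh1 : h < 1) :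
    |max (1 - u) 0 ^ h - max (-u) 0 ^ h| ≤
      Set.indicator (Set.Ioi 1) (fun t => 2 * t ^ (h - 1)) (2 - u) := by
  by_cases hu : 1 < 2 - u
  · rw [Set.indicator_of_mem (by exact hu)]
    have hx : 0 < 1 - u := by linarith
    have hmono : max (-u) 0 ^ h ≤ max (1 - u) 0 ^ h :=
      rpow_le_rpow (le_max_right _ _) (max_le_max (by linarith) le_rfl) hh0.le
    rw [abs_of_nonneg (by linarith), max_eq_left hx.le]
    have h2 : (2 : ℝ) * (2 - u) ^ (h - 1) ≥ ((2 - u) / 2) ^ (h - 1) := by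
      rw [div_rpow (by linarith) (by norm_num), div_eq_mul_inv, ← rpow_neg (by norm_num), mul_comm]
      have : (2 : ℝ) ^ (-(h - 1)) ≤ 2 ^ (1 : ℝ) :=
        rpow_le_rpow_of_exponent_le (by norm_num) (by linarith)
      rw [rpow_one] at this
      have h0 : 0 ≤ (2 - u) ^ (h - 1) := rpow_nonneg (by linarith) _
      gcongr
    refine le_trans ?_ h2
    rcases le_total 0 u with h0 | h0
    · rw [max_eq_right (by linarith), zero_rpow hh0.ne', sub_zero]
      calc (1 - u) ^ h ≤ 1 := rpow_le_one hx.le (by linarith) hh0.le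
        _ ≤ _ := one_le_rpow_of_pos_of_le_one_of_nonpos (by linarith) (by linarith) (by linarith)
    · rw [max_eq_left (by linarith)]
      have hq : -u / (1 - u) ≤ (-u / (1 - u)) ^ h := by
        rcases h0.eq_or_lt with h00 | h00
        · simp [h00, hh0.ne']
        · refine self_le_rpow_of_le_one (by apply div_nonneg <;> linarith) ?_ hh1.le
          rw [div_le_one hx]; linarith
      have hA : (1 - u) ^ h - (-u) ^ h ≤ (1 - u) ^ (h - 1) := by
        rw [div_rpow (by linarith) hx.le] at hq
        have hp : 0 < (1 - u) ^ h := rpow_pos_of_pos hx _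
        rw [rpow_sub_one hx.ne']
        rw [div_le_div_iff₀ hx hp] at hq
        rw [le_div_iff₀ hx]
        nlinarith
      refine hA.trans ?_
      exact rpow_le_rpow_of_nonpos (by linarith) (by linarith) (by linarith)
  · rw [Set.indicator_of_notMem (by exact hu), max_eq_right (by linarith),
      max_eq_right (by linarith)]
    simp

lemma aux_dom (h e t s : ℝ) :
    Set.indicator (Set.Ioi 1) (fun t => 2 * t ^ (h - 1)) t *
      Set.indicator (Set.Ioi 1) (fun t => 2 * t ^ (h - 1)) s * |t - s| ^ e ≤
      4 * (auxF h e (t, s) + auxF h e (s, t)) := by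
  have n1 := auxF_nonneg h e (t, s)
  have n2 := auxF_nonneg h e (s, t)
  by_cases ht : 1 < t
  · by_cases hs : 1 < s
    · rw [Set.indicator_of_mem (by exact ht), Set.indicator_of_mem (by exact hs)]
      rcases le_total s t with hst | hst
      · have : auxF h e (t, s) = t ^ (h - 1) * (s ^ (h - 1) * (t - s) ^ e) :=
          Set.indicator_of_mem (by exact ⟨ht, by linarith, hst⟩) _
        rw [abs_of_nonneg (by linarith)]
        linarith
      · have : auxF h e (s, t) = s ^ (h - 1) * (t ^ (h - 1) * (s - t) ^ e) :=
          Set.indicator_of_mem (by exact ⟨hs, by linarith, hst⟩) _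
        rw [abs_of_nonpos (by linarith), neg_sub]
        linarith
    · rw [Set.indicator_of_notMem (a := s) (by exact hs)]
      linarith
  · rw [Set.indicator_of_notMem (a := t) (by exact ht)]
    linarith

/-- finiteness of the second moment of `Y^d(1)`: for `d ∈ (0,1/2)` and
`h ∈ (0, 1/2−d)`, the function
`(u,v) ↦ ((1−u)_+^h − (−u)_+^h)((1−v)_+^h − (−v)_+^h)|u−v|^{2d−1}` is integrable on `ℝ × ℝ`. -/
theorem Y_second_moment_finite (d h : ℝ) (hd0 : 0 < d) (hd2 : d < 1 / 2)
    (hh0 : 0 < h) (hh : h < 1 / 2 - d) :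
    Integrable (fun p : ℝ × ℝ =>
        (max (1 - p.1) 0 ^ h - max (-p.1) 0 ^ h) * (max (1 - p.2) 0 ^ h - max (-p.2) 0 ^ h) *
          |p.1 - p.2| ^ (2 * d - 1)) := by
  have hF := auxF_integrable h (2 * d - 1) hh0 (by linarith) (by linarith)
  have hK : Integrable (fun p : ℝ × ℝ =>
      4 * (auxF h (2 * d - 1) (p.1, p.2) + auxF h (2 * d - 1) (p.2, p.1))) :=
    (hF.add hF.swap).const_mul 4
  have hmp : MeasurePreserving (Prod.map (fun u : ℝ => 2 - u) (fun u : ℝ => 2 - u))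
      (volume : Measure (ℝ × ℝ)) volume :=
    (Measure.measurePreserving_sub_left volume (2 : ℝ)).prod (Measure.measurePreserving_sub_left volume (2 : ℝ))
  have hK2 := hmp.integrable_comp_of_integrable hK
  refine hK2.mono' (Measurable.aestronglyMeasurable (by fun_prop)) ?_
  refine Filter.Eventually.of_forall fun p => ?_
  refine le_trans ?_ (aux_dom h (2 * d - 1) (2 - p.1) (2 - p.2))
  have e1 : |2 - p.1 - (2 - p.2)| = |p.1 - p.2| := by
    rw [abs_sub_comm p.1]; congr 1; ring
  have hr : 0 ≤ |p.1 - p.2| ^ (2 * d - 1) := rpow_nonneg (abs_nonneg _) _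
  rw [e1, norm_mul, norm_mul, Real.norm_of_nonneg hr]
  have a1 := aux_g h p.1 hh0 (by linarith)
  have a2 := aux_g h p.2 hh0 (by linarith)
  exact mul_le_mul_of_nonneg_right (mul_le_mul a1 a2 (abs_nonneg _) ((abs_nonneg _).trans a1)) hr
end
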